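/- Let n ≥ 1, let A be an n×n complex matrix whose characteristic polynomial splits over the reals with real eigenvalues λ_1(A) ≥ λ_2(A) ≥ ⋯ ≥ λ_n(A), let c be any real number, let q be a positive odd integer, and set C = (A − c·I_n)^q, c̄ = tr C / n and B = C − c̄·I_n; the eigenvalues of C are (λ_i(A) − c)^q, so tr C and tr B^{2r} are real with tr B^{2r} ≥ 0. Then for every positive integer r and every 1 ≤ j ≤ n: c + (c̄ − α)^{1/q} ≤ λ_j(A) ≤ c + (c̄ + β)^{1/q}, where α = ( (j−1)^{2r−1}·tr B^{2r} / ( (n−j+1)^{2r} + (n−j+1)(j−1)^{2r−1} ) )^{1/(2r)}, β = ( (n−j)^{2r−1}·tr B^{2r} / ( j^{2r} + j(n−j)^{2r−1} ) )^{1/(2r)}, and y^{1/q} denotes the unique real q-th root of the real number y (well defined since q is odd). -/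

import Mathlib

/-!
Evaluating a complex polynomial `g` at a matrix whose characteristic polynomial is `∏ (X - z i)`
gives a matrix whose characteristic polynomial is `∏ (X - g (z i))`, hence with trace `∑ g (z i)`
(`trace_aeval_of_charpoly_eq_prod`). Consequently `x i = (lam i - c) ^ q - cbar` is an antitone real
family with `∑ x i = 0` and `∑ x i ^ (2 * r) = tr (B ^ (2 * r))`.

The bounds then follow from one inequality on real families of zero sum
(`le_rpow_of_sum_eq_zero`): if the `k` numbers indexed by `s` are all at least `y > 0`, their sum is
at least `k * y`, so the `m` remaining numbers have sum at most `- k * y`, and the power mean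
inequality bounds their `p`-th power sum from below. Taking for `s` the indices up to `j` gives the
upper bound; applying it to `-x` and the indices from `j` on gives the lower bound. Odd powers being
strictly increasing, the bounds pass to the `q`-th roots.
-/

open Polynomial in
/-- The identity is multiplicative in `g` and clear for constants and for `X - C w`, and every
complex polynomial is a product of such factors. -/
lemma det_aeval_of_charpoly_eq_prod {n : ℕ} (A : Matrix (Fin n) (Fin n) ℂ) (z : Fin n → ℂ)
    (h : A.charpoly = ∏ i, (X - C (z i))) (g : ℂ[X]) :
    (aeval A g).det = ∏ i, g.eval (z i) := by
  have hlin : ∀ w : ℂ, (aeval A (X - C w)).det = ∏ i, (X - C w).eval (z i) := by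
    intro w
    have h1 : (Matrix.scalar (Fin n) w - A).det = ∏ i, (w - z i) := by
      rw [← Matrix.eval_charpoly, h, eval_prod]
      simp
    have h2 : aeval A (X - C w) = -(Matrix.scalar (Fin n) w - A) := by
      simp [Matrix.algebraMap_eq_diagonal, Pi.algebraMap_def]
    rw [h2, Matrix.det_neg, h1, Fintype.card_fin]
    simp only [eval_sub, eval_X, eval_C]
    rw [show (-1 : ℂ) ^ n = ∏ _i : Fin n, (-1 : ℂ) by simp, ← Finset.prod_mul_distrib]
    exact Finset.prod_congr rfl fun i _ => by ring
  have hmul : ∀ f g : ℂ[X], (aeval A f).det = ∏ i, f.eval (z i) →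
      (aeval A g).det = ∏ i, g.eval (z i) →
      (aeval A (f * g)).det = ∏ i, (f * g).eval (z i) := by
    intro f g hf hg
    simp only [map_mul, Matrix.det_mul, hf, hg, eval_mul, Finset.prod_mul_distrib]
  rw [(IsAlgClosed.splits g).eq_prod_roots]
  refine hmul _ _ ?_ ?_
  · simp [Matrix.algebraMap_eq_diagonal, Pi.algebraMap_def]
  · refine Multiset.prod_induction
      (fun f : ℂ[X] => (aeval A f).det = ∏ i, f.eval (z i)) _ hmul (by simp) ?_
    intro f hf
    obtain ⟨w, -, rfl⟩ := Multiset.mem_map.1 hf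
    exact hlin w

open Polynomial in
lemma trace_aeval_of_charpoly_eq_prod {n : ℕ} (A : Matrix (Fin n) (Fin n) ℂ) (z : Fin n → ℂ)
    (h : A.charpoly = ∏ i, (X - C (z i))) (g : ℂ[X]) :
    (aeval A g).trace = ∑ i, g.eval (z i) := by
  have hcp : (aeval A g).charpoly = ∏ i, (X - C (g.eval (z i))) := by
    refine Polynomial.funext fun w => ?_
    have h1 : Matrix.scalar (Fin n) w - aeval A g = aeval A (C w - g) := by
      simp [Matrix.algebraMap_eq_diagonal, Pi.algebraMap_def]
    rw [Matrix.eval_charpoly, h1, det_aeval_of_charpoly_eq_prod A z h, eval_prod]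
    simp
  have hroots := roots_multiset_prod_X_sub_C (Finset.univ.val.map fun i => g.eval (z i))
  rw [Multiset.map_map] at hroots
  rw [Matrix.trace_eq_sum_roots_charpoly, hcp]
  exact congrArg Multiset.sum hroots

/-- The case `m = 0` is included: then the zero sum forces `y ≤ 0`. -/
lemma le_rpow_of_sum_eq_zero {n : ℕ} (x : Fin n → ℝ) (hx : ∑ i, x i = 0)
    (s : Finset (Fin n)) (k m y : ℝ) (hk : (s.card : ℝ) = k) (hm : (sᶜ.card : ℝ) = m)
    (hk0 : 0 < k) (hy : ∀ i ∈ s, y ≤ x i) (r : ℕ) (hr : 1 ≤ r) :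
    y ≤ (m ^ (2 * r - 1) * (∑ i, x i ^ (2 * r)) / (k ^ (2 * r) + k * m ^ (2 * r - 1)))
          ^ ((1 : ℝ) / (2 * r)) := by
  have hm0 : 0 ≤ m := hm ▸ Nat.cast_nonneg _
  have heven : Even (2 * r) := even_two_mul r
  have hS : 0 ≤ ∑ i, x i ^ (2 * r) := Finset.sum_nonneg fun i _ => heven.pow_nonneg _
  have hD : 0 < k ^ (2 * r) + k * m ^ (2 * r - 1) := by positivity
  rcases le_or_gt y 0 with hy0 | hy0
  · exact hy0.trans (by positivity)
  have hT : k * y ≤ ∑ i ∈ s, x i := by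
    have := Finset.card_nsmul_le_sum s x y hy
    rwa [nsmul_eq_mul, hk] at this
  have hsplit : ∑ i ∈ s, x i + ∑ i ∈ sᶜ, x i = 0 := by rw [Finset.sum_add_sum_compl, hx]
  have hTc : k * y ≤ ∑ i ∈ sᶜ, |x i| := by
    have := Finset.sum_le_sum fun i (_ : i ∈ sᶜ) => neg_le_abs (x i)
    rw [Finset.sum_neg_distrib] at this
    linarith
  have hcompl : (k * y) ^ (2 * r) ≤ m ^ (2 * r - 1) * ∑ i ∈ sᶜ, x i ^ (2 * r) := by
    refine (pow_le_pow_left₀ (by positivity) hTc _).trans ?_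
    have := pow_sum_le_card_mul_sum_pow (s := sᶜ) (f := fun i => |x i|)
      (fun i _ => abs_nonneg _) (2 * r - 1)
    rw [Nat.sub_add_cancel (by omega), hm] at this
    simpa only [heven.pow_abs] using this
  have hs : k * y ^ (2 * r) ≤ ∑ i ∈ s, x i ^ (2 * r) := by
    have := Finset.card_nsmul_le_sum s (fun i => x i ^ (2 * r)) (y ^ (2 * r))
      fun i hi => pow_le_pow_left₀ hy0.le (hy i hi) _
    rwa [nsmul_eq_mul, hk] at this
  have hmain : y ^ (2 * r) ≤
      m ^ (2 * r - 1) * (∑ i, x i ^ (2 * r)) / (k ^ (2 * r) + k * m ^ (2 * r - 1)) := by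
    rw [le_div_iff₀ hD, ← Finset.sum_add_sum_compl s]
    rw [mul_pow] at hcompl
    have := mul_le_mul_of_nonneg_left hs (pow_nonneg hm0 (2 * r - 1))
    linarith
  calc y = (y ^ (2 * r)) ^ ((1 : ℝ) / (2 * r)) := by
        have := Real.pow_rpow_inv_natCast hy0.le (n := 2 * r) (by omega)
        push_cast at this
        rw [one_div, this]
    _ ≤ _ := Real.rpow_le_rpow (by positivity) hmain (by positivity)

/-- eigenvalue bounds via an odd power of a shifted matrix.
For odd q, the real q-th roots of c̄ − α and c̄ + β are represented by the
(unique) real numbers a, b with a^q = c̄ − α and b^q = c̄ + β. -/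
theorem eigenvalue_bounds_shifted_odd_power
    (n : ℕ) (hn : 1 ≤ n)
    (A : Matrix (Fin n) (Fin n) ℂ)
    (lam : Fin n → ℝ) (hlam : Antitone lam)
    (hchar : A.charpoly = ∏ i : Fin n, (Polynomial.X - Polynomial.C ((lam i : ℝ) : ℂ)))
    (c : ℝ) (q : ℕ) (hq : Odd q) (hq1 : 1 ≤ q)
    (C : Matrix (Fin n) (Fin n) ℂ)
    (hC : C = (A - (c : ℂ) • (1 : Matrix (Fin n) (Fin n) ℂ)) ^ q)
    (cbar : ℝ) (hcbar : cbar = (Matrix.trace C).re / n)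
    (B : Matrix (Fin n) (Fin n) ℂ)
    (hB : B = C - (cbar : ℂ) • (1 : Matrix (Fin n) (Fin n) ℂ))
    (r : ℕ) (hr : 1 ≤ r)
    (j : ℕ) (hj : 1 ≤ j) (hjn : j ≤ n)
    (α β : ℝ)
    (hα : α = (((j : ℝ) - 1) ^ (2 * r - 1) * (Matrix.trace (B ^ (2 * r))).re /
        (((n : ℝ) - j + 1) ^ (2 * r) + ((n : ℝ) - j + 1) * ((j : ℝ) - 1) ^ (2 * r - 1)))
          ^ ((1 : ℝ) / (2 * r)))
    (hβ : β = (((n : ℝ) - j) ^ (2 * r - 1) * (Matrix.trace (B ^ (2 * r))).re /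
        ((j : ℝ) ^ (2 * r) + (j : ℝ) * ((n : ℝ) - j) ^ (2 * r - 1)))
          ^ ((1 : ℝ) / (2 * r)))
    (a b : ℝ) (ha : a ^ q = cbar - α) (hb : b ^ q = cbar + β) :
    c + a ≤ lam ⟨j - 1, by omega⟩ ∧ lam ⟨j - 1, by omega⟩ ≤ c + b := by
  have hn0 : (n : ℝ) ≠ 0 := by positivity
  set x : Fin n → ℝ := fun i => (lam i - c) ^ q - cbar with hxdef
  have htrC : C.trace = ((∑ i, (lam i - c) ^ q : ℝ) : ℂ) := by
    have := trace_aeval_of_charpoly_eq_prod A (fun i => (lam i : ℂ)) hchar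
      ((Polynomial.X - Polynomial.C (c : ℂ)) ^ q)
    simp only [map_pow, map_sub, Polynomial.aeval_X, Polynomial.aeval_C,
      Algebra.algebraMap_eq_smul_one, Polynomial.eval_pow, Polynomial.eval_sub,
      Polynomial.eval_X, Polynomial.eval_C] at this
    rw [hC, this]
    push_cast
    rfl
  have htrB : (B ^ (2 * r)).trace = ((∑ i, x i ^ (2 * r) : ℝ) : ℂ) := by
    have := trace_aeval_of_charpoly_eq_prod A (fun i => (lam i : ℂ)) hchar
      (((Polynomial.X - Polynomial.C (c : ℂ)) ^ q - Polynomial.C (cbar : ℂ)) ^ (2 * r))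
    simp only [map_pow, map_sub, Polynomial.aeval_X, Polynomial.aeval_C,
      Algebra.algebraMap_eq_smul_one, Polynomial.eval_pow, Polynomial.eval_sub,
      Polynomial.eval_X, Polynomial.eval_C] at this
    rw [hB, hC, this]
    simp only [hxdef]
    push_cast
    rfl
  have hsum : ∑ i, x i = 0 := by
    rw [htrC, Complex.ofReal_re] at hcbar
    simp only [hxdef, Finset.sum_sub_distrib, Finset.sum_const, Finset.card_univ,
      Fintype.card_fin, nsmul_eq_mul, hcbar]
    field_simp
    ring
  have hanti : Antitone x := fun i k hik =>
    sub_le_sub_right (hq.strictMono_pow.monotone (sub_le_sub_right (hlam hik) c)) _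
  rw [htrB, Complex.ofReal_re] at hα hβ
  set J : Fin n := ⟨j - 1, by omega⟩ with hJ
  have hj1 : (1 : ℝ) ≤ j := by exact_mod_cast hj
  have hjn' : (j : ℝ) ≤ n := by exact_mod_cast hjn
  constructor
  · have hcard : (Finset.Ici J).card = n - j + 1 := by
      rw [Fin.card_Ici]; simp only [hJ]; omega
    have key := le_rpow_of_sum_eq_zero (fun i => -x i) (by simp [hsum]) (Finset.Ici J)
      ((n : ℝ) - j + 1) ((j : ℝ) - 1) (-x J)
      (by rw [hcard]; push_cast [Nat.cast_sub hjn]; ring)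
      (by
        rw [Finset.card_compl, hcard, Fintype.card_fin,
          show n - (n - j + 1) = j - 1 by omega, Nat.cast_sub hj, Nat.cast_one])
      (by linarith)
      (fun i hi => neg_le_neg (hanti (Finset.mem_Ici.1 hi))) r hr
    simp only [(even_two_mul r).neg_pow] at key
    rw [← hα] at key
    have hpow : a ^ q ≤ (lam J - c) ^ q := by
      simp only [hxdef] at key
      linarith
    linarith [hq.strictMono_pow.le_iff_le.1 hpow]
  · have hcard : (Finset.Iic J).card = j := by
      rw [Fin.card_Iic]; simp only [hJ]; omega
    have key := le_rpow_of_sum_eq_zero x hsum (Finset.Iic J)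
      (j : ℝ) ((n : ℝ) - j) (x J)
      (by rw [hcard])
      (by rw [Finset.card_compl, hcard, Fintype.card_fin, Nat.cast_sub hjn])
      (by linarith)
      (fun i hi => hanti (Finset.mem_Iic.1 hi)) r hr
    rw [← hβ] at key
    have hpow : (lam J - c) ^ q ≤ b ^ q := by
      simp only [hxdef] at key
      linarith
    linarith [hq.strictMono_pow.le_iff_le.1 hpow]
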